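/- The following two identities hold: (a) Σ_{r=1}^{M̄} ν_r = Σ_{r=1}^{M̄} γ_r − Σ_{r=1}^{M̄} κ̃_r·γ_r; and (b) for every j ∈ {1,…,M̄}, Σ_{i=1}^{M̄} κ̃_j·γ_j/(ν_i − γ_j) = Σ_{r≠j} κ̃_r·γ_r/(γ_r − γ_j) + Σ_{i≠j} κ̃_j·γ_j/(γ_i − γ_j) − 1. -/

import Mathlib

open scoped BigOperators
open Finset

/-!
Let `N = ∏ (X - ν i)`, which equals `∏ (X - γ r) + ∑ w r * ∏_{k ≠ r} (X - γ k)` with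
`w r = κ̃ r * γ r`. Comparing the second-highest coefficients gives (a). For (b), compute the
logarithmic derivative `N' / N` at `γ j` in two ways: from the product it is `∑ 1 / (γ j - ν i)`;
on the other side, with `Q = ∏_{k ≠ j} (γ j - γ k)`, one has `N (γ j) = w j * Q`, and `N' (γ j) / Q`
is `1`, plus `w j` times the logarithmic derivative of `∏_{k ≠ j} (X - γ k)` at `γ j`, plus one term
`w r / (γ j - γ r)` for each `r ≠ j`.
-/

open Polynomial Lagrange

section Nodal

variable {ι : Type*} {s : Finset ι}

lemma prod_sub_eq_neg_one_pow_mul_eval_nodal {R : Type*} [CommRing R] (s : Finset ι)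
    (v : ι → R) (x : R) : ∏ i ∈ s, (v i - x) = (-1) ^ #s * eval x (nodal s v) := by
  simp_rw [eval_nodal, ← prod_const, ← prod_mul_distrib, neg_one_mul, neg_sub]

variable {K : Type*} [Field K] {v : ι → K} {x : K}

lemma eval_nodal_erase_eq_div [DecidableEq ι] {i : ι} (hi : i ∈ s) (hx : x ≠ v i) :
    eval x (nodal (s.erase i) v) = eval x (nodal s v) / (x - v i) := by
  rw [nodal_eq_mul_nodal_erase hi, eval_mul, eval_sub, eval_X, eval_C,
    mul_div_cancel_left₀ _ (sub_ne_zero.2 hx)]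

lemma eval_derivative_nodal (hx : ∀ i ∈ s, x ≠ v i) :
    eval x (derivative (nodal s v)) = eval x (nodal s v) * ∑ i ∈ s, 1 / (x - v i) := by
  classical
  rw [derivative_nodal, eval_finsetSum, mul_sum]
  exact sum_congr rfl fun i hi => by rw [eval_nodal_erase_eq_div hi (hx i hi), mul_one_div]

end Nodal

/-- The numerator `∏ (X - γ r) + ∑ w r * ∏_{k ≠ r} (X - γ k)` of the secular equation
`1 = ∑ w r / (γ r - X)`, normalized to be monic. Clearing denominators makes it meaningful at the
poles `γ r` too. -/
noncomputable def secularPolynomial {ι R : Type*} [DecidableEq ι] [CommRing R] (s : Finset ι)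
    (γ w : ι → R) : R[X] :=
  nodal s γ + ∑ r ∈ s, C (w r) * nodal (s.erase r) γ

namespace secularPolynomial

variable {ι : Type*} [DecidableEq ι] {s : Finset ι}

section CommRing

variable {R : Type*} [CommRing R]

lemma prod_sub_sub_sum_eq (s : Finset ι) (γ w : ι → R) (x : R) :
    ∏ r ∈ s, (γ r - x) - ∑ r ∈ s, w r * ∏ k ∈ s.erase r, (γ k - x) =
      (-1) ^ #s * eval x (secularPolynomial s γ w) := by
  simp only [prod_sub_eq_neg_one_pow_mul_eval_nodal, secularPolynomial, eval_add, eval_finsetSum,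
    eval_mul, eval_C, mul_add, mul_sum]
  rw [sub_eq_add_neg, ← sum_neg_distrib]
  congr 1
  refine sum_congr rfl fun r hr => ?_
  rw [← card_erase_add_one hr, pow_succ]
  ring

lemma nodal_eq_of_forall_prod_sub_eq [IsDomain R] [Infinite R] {γ w ν : ι → R}
    (h : ∀ x, ∏ r ∈ s, (ν r - x) =
      ∏ r ∈ s, (γ r - x) - ∑ r ∈ s, w r * ∏ k ∈ s.erase r, (γ k - x)) :
    nodal s ν = secularPolynomial s γ w := by
  refine Polynomial.funext fun x => ?_
  have hx := h x
  rw [prod_sub_sub_sum_eq, prod_sub_eq_neg_one_pow_mul_eval_nodal] at hx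
  exact mul_left_cancel₀ (pow_ne_zero _ (neg_ne_zero.2 one_ne_zero)) hx

lemma eval_node {γ w : ι → R} {j : ι} (hj : j ∈ s) :
    eval (γ j) (secularPolynomial s γ w) = w j * eval (γ j) (nodal (s.erase j) γ) := by
  simp only [secularPolynomial, eval_add, eval_nodal_at_node hj, zero_add, eval_finsetSum,
    eval_mul, eval_C]
  refine sum_eq_single_of_mem j hj fun r _ hrj => ?_
  rw [eval_nodal_at_node (mem_erase.2 ⟨hrj.symm, hj⟩), mul_zero]

lemma degree_sum_C_mul_nodal_erase_lt [Nontrivial R] (s : Finset ι) (γ w : ι → R) :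
    degree (∑ r ∈ s, C (w r) * nodal (s.erase r) γ) < #s := by
  refine (degree_sum_le _ _).trans_lt ((Finset.sup_lt_iff (WithBot.bot_lt_coe _)).2 fun r hr => ?_)
  calc degree (C (w r) * nodal (s.erase r) γ)
      ≤ degree (nodal (s.erase r) γ) := by
        simpa only [smul_eq_C_mul] using degree_smul_le (w r) (nodal (s.erase r) γ)
    _ = #(s.erase r) := degree_nodal
    _ < #s := by exact_mod_cast card_erase_lt_of_mem hr

lemma natDegree_eq [Nontrivial R] (s : Finset ι) (γ w : ι → R) :
    (secularPolynomial s γ w).natDegree = #s := by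
  rw [secularPolynomial, natDegree_add_eq_left_of_degree_lt, natDegree_nodal]
  exact degree_nodal (R := R) ▸ degree_sum_C_mul_nodal_erase_lt s γ w

lemma nextCoeff_eq [Nontrivial R] (s : Finset ι) (γ w : ι → R) :
    (secularPolynomial s γ w).nextCoeff = ∑ r ∈ s, w r - ∑ r ∈ s, γ r := by
  rcases s.eq_empty_or_nonempty with rfl | hs
  · simp [secularPolynomial, nextCoeff]
  have coeff_erase : ∀ r ∈ s, (nodal (s.erase r) γ).coeff (#s - 1) = 1 := fun r hr => by
    rw [← card_erase_of_mem hr, ← natDegree_nodal (R := R) (v := γ)]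
    exact nodal_monic.coeff_natDegree
  have coeff_sum : (∑ r ∈ s, C (w r) * nodal (s.erase r) γ).coeff (#s - 1) = ∑ r ∈ s, w r := by
    rw [finsetSum_coeff]
    exact sum_congr rfl fun r hr => by rw [coeff_C_mul, coeff_erase r hr, mul_one]
  rw [nextCoeff_of_natDegree_pos (by simpa only [natDegree_eq] using hs.card_pos), natDegree_eq,
    secularPolynomial, coeff_add, coeff_sum, nodal_eq,
    prod_X_sub_C_coeff_card_pred s γ hs.card_pos, neg_add_eq_sub]

lemma sum_eq_of_nodal_eq {κ : Type*} {t : Finset κ} {γ w : ι → R} {ν : κ → R}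
    (h : nodal t ν = secularPolynomial s γ w) :
    ∑ i ∈ t, ν i = ∑ r ∈ s, γ r - ∑ r ∈ s, w r := by
  nontriviality R
  have hcoeff := congrArg nextCoeff h
  rw [nodal_eq, prod_X_sub_C_nextCoeff, nextCoeff_eq] at hcoeff
  linear_combination -hcoeff

end CommRing

section Field

variable {K : Type*} [Field K] {γ w : ι → K} {j : ι}

lemma eval_derivative_node (hγ : ∀ k ∈ s.erase j, γ j ≠ γ k) (hj : j ∈ s) :
    eval (γ j) (derivative (secularPolynomial s γ w)) =
      eval (γ j) (nodal (s.erase j) γ) *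
        (1 + w j * ∑ k ∈ s.erase j, 1 / (γ j - γ k) + ∑ r ∈ s.erase j, w r / (γ j - γ r)) := by
  have term_of_ne : ∀ r ∈ s.erase j, w r * eval (γ j) (derivative (nodal (s.erase r) γ)) =
      eval (γ j) (nodal (s.erase j) γ) * (w r / (γ j - γ r)) := fun r hr => by
    have hjr : j ∈ s.erase r := mem_erase.2 ⟨(ne_of_mem_erase hr).symm, hj⟩
    rw [eval_nodal_derivative_eval_node_eq hjr, erase_right_comm,
      eval_nodal_erase_eq_div hr (hγ r hr)]
    ring
  simp only [secularPolynomial, derivative_add, derivative_sum, derivative_C_mul, eval_add,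
    eval_finsetSum, eval_C_mul]
  rw [eval_nodal_derivative_eval_node_eq hj, ← add_sum_erase s _ hj, sum_congr rfl term_of_ne,
    eval_derivative_nodal hγ, ← mul_sum]
  ring

lemma sum_div_sub_eq_of_nodal_eq {κ : Type*} {t : Finset κ} {ν : κ → K}
    (hγ : ∀ k ∈ s.erase j, γ j ≠ γ k) (hj : j ∈ s) (hw : w j ≠ 0)
    (h : nodal t ν = secularPolynomial s γ w) :
    ∑ i ∈ t, w j / (ν i - γ j) =
      ∑ r ∈ s.erase j, w r / (γ r - γ j) + ∑ k ∈ s.erase j, w j / (γ k - γ j) - 1 := by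
  have hQ : eval (γ j) (nodal (s.erase j) γ) ≠ 0 := eval_nodal_not_at_node hγ
  have hval : eval (γ j) (nodal t ν) = w j * eval (γ j) (nodal (s.erase j) γ) := by
    rw [h, eval_node hj]
  have hν : ∀ i ∈ t, γ j ≠ ν i := fun i hi hij =>
    mul_ne_zero hw hQ (hval ▸ hij ▸ eval_nodal_at_node hi)
  have hlog : w j * ∑ i ∈ t, 1 / (γ j - ν i) =
      1 + w j * ∑ k ∈ s.erase j, 1 / (γ j - γ k) + ∑ r ∈ s.erase j, w r / (γ j - γ r) := by
    apply mul_left_cancel₀ hQ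
    rw [← eval_derivative_node hγ hj, ← h, eval_derivative_nodal hν, hval]
    ring
  have div_sub_eq_neg_div (c a : K) : c / (a - γ j) = -(c / (γ j - a)) := by
    rw [← neg_sub, div_neg]
  simp only [mul_sum, mul_one_div] at hlog
  simp only [div_sub_eq_neg_div, sum_neg_distrib]
  linear_combination -hlog

end Field

end secularPolynomial

open secularPolynomial

theorem nu_root_sum_identities_general {ι κ K : Type*} [DecidableEq ι] [Field K] {s : Finset ι}
    {t : Finset κ} {γ w : ι → K} {ν : κ → K} (hγ : Set.InjOn γ s) (hw : ∀ r ∈ s, w r ≠ 0)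
    (h : nodal t ν = secularPolynomial s γ w) :
    ∑ i ∈ t, ν i = ∑ r ∈ s, γ r - ∑ r ∈ s, w r ∧
      ∀ j ∈ s, ∑ i ∈ t, w j / (ν i - γ j) =
        ∑ r ∈ s.erase j, w r / (γ r - γ j) + ∑ i ∈ s.erase j, w j / (γ i - γ j) - 1 := by
  refine ⟨sum_eq_of_nodal_eq h, fun j hj => sum_div_sub_eq_of_nodal_eq (fun k hk => ?_) hj
    (hw j hj) h⟩
  exact hγ.ne hj (mem_of_mem_erase hk) (ne_of_mem_erase hk).symm

/-- Lemma 7 (eq:sum_gamma_nus and eq:sum_inv_nu_minus_gamma): if `ν₁,…,ν_{M̄}` are the roots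
(with multiplicity) of `1 = Σ_r κ̃_r·γ_r/(γ_r − ν)`, characterized by the polynomial identity
`∏_r (ν_r − X) = ∏_r (γ_r − X) − Σ_r κ̃_r·γ_r·∏_{k≠r} (γ_k − X)`, then
(a) `Σ_r ν_r = Σ_r γ_r − Σ_r κ̃_r·γ_r`, and
(b) for every `j`,
`Σ_i κ̃_j·γ_j/(ν_i − γ_j) = Σ_{r≠j} κ̃_r·γ_r/(γ_r − γ_j) + Σ_{i≠j} κ̃_j·γ_j/(γ_i − γ_j) − 1`. -/
theorem nu_root_sum_identities (Mbar : ℕ) (γ κtil : Fin Mbar → ℝ)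
    (hγpos : ∀ m, 0 < γ m) (hγmono : StrictMono γ) (hκ : ∀ m, 0 < κtil m)
    (ν : Fin Mbar → ℂ)
    (hpoly : ∀ X : ℂ,
      ∏ r, (ν r - X) =
        ∏ r, ((γ r : ℂ) - X) -
          ∑ r, (κtil r : ℂ) * (γ r : ℂ) * ∏ k ∈ univ.erase r, ((γ k : ℂ) - X)) :
    (∑ r, ν r = ∑ r, (γ r : ℂ) - ∑ r, (κtil r : ℂ) * (γ r : ℂ)) ∧
    (∀ j : Fin Mbar,
      ∑ i, (κtil j : ℂ) * (γ j : ℂ) / (ν i - (γ j : ℂ))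
        = ∑ r ∈ univ.erase j, (κtil r : ℂ) * (γ r : ℂ) / ((γ r : ℂ) - (γ j : ℂ))
          + ∑ i ∈ univ.erase j, (κtil j : ℂ) * (γ j : ℂ) / ((γ i : ℂ) - (γ j : ℂ))
          - 1) := by
  simpa using nu_root_sum_identities_general
    (Complex.ofReal_injective.comp hγmono.injective).injOn
    (fun r _ => by simp [(hκ r).ne', (hγpos r).ne'])
    (nodal_eq_of_forall_prod_sub_eq (w := fun r => (κtil r : ℂ) * γ r) hpoly)
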